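/- arXiv:2512.02903 — 2 statements merged into one kernel-verified Lean document; each statement's English description precedes it below -/
import Mathlib

section
/- For all indices i, j ∈ {1,2,3} and every point (r,v) of phase space with A(r,v) ≠ 0, the Poisson bracket of a component of the LRL vector with a component of the LRL direction vector is {A_j, Θ_i}(r,v) = 2 E(r,v) ‖A(r,v)‖⁻¹ Σ_k ( (Σ_l ε_{jlk} Θ_l(r,v)) Θ_i(r,v) − ε_{jik} ) L_k(r,v). -/
/-!
A bracket `{F, ·}` is a derivation, so it sees a vector field `A` only through the vector
`{F, A}`: for every differentiable `φ`, `{F, φ ∘ A} = dφ_A {F, A}`. The derivative of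
`x ↦ x / ‖x‖` at `A` is `‖A‖⁻¹` times the orthogonal projection onto the complement of `Θ`, hence
`{A_j, Θ_i} = ‖A‖⁻¹ ({A_j, A_i} − (∑ l, Θ_l {A_j, A_l}) Θ_i)`,
and it remains to insert the classical relation `{A_j, A_l} = −2E ∑ k, ε_{jlk} L_k`. The latter
holds in any dimension in the form `{A · u, A · w} = −2E ((r · u)(v · w) − (v · u)(r · w))`, once
`v × (r × v)` is written as `‖v‖² r − (r · v) v`.
-/

noncomputable section

/-- Physical 3-space. -/
abbrev E3 : Type := EuclideanSpace ℝ (Fin 3)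

/-- Build a vector in `E3` from its components. -/
def toE3 (f : Fin 3 → ℝ) : E3 := (EuclideanSpace.equiv (Fin 3) ℝ).symm f

/-- Cross product in `ℝ³`. -/
def cross (a b : E3) : E3 :=
  toE3 ![a 1 * b 2 - a 2 * b 1, a 2 * b 0 - a 0 * b 2, a 0 * b 1 - a 1 * b 0]

/-- Dot product in `ℝ³`. -/
def dot (a b : E3) : ℝ := ∑ i, a i * b i

/-- Gradient in the `r` variable of a function on phase space. -/
def gradR (F : E3 × E3 → ℝ) (p : E3 × E3) : E3 := gradient (fun x => F (x, p.2)) p.1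

/-- Gradient in the `v` variable of a function on phase space. -/
def gradV (F : E3 × E3 → ℝ) (p : E3 × E3) : E3 := gradient (fun y => F (p.1, y)) p.2

/-- Poisson bracket of two functions on phase space. -/
def pb (F G : E3 × E3 → ℝ) (p : E3 × E3) : ℝ :=
  dot (gradR F p) (gradV G p) - dot (gradR G p) (gradV F p)

/-- Energy `E(r,v) = (1/2)‖v‖² − κ/‖r‖`. -/
def energy (κ : ℝ) (p : E3 × E3) : ℝ := (1/2) * ‖p.2‖^2 - κ / ‖p.1‖

/-- Angular momentum `L(r,v) = r × v`. -/
def angMom (p : E3 × E3) : E3 := cross p.1 p.2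

/-- Laplace–Runge–Lenz vector `A(r,v) = v × L − κ r/‖r‖`. -/
def lrl (κ : ℝ) (p : E3 × E3) : E3 := cross p.2 (angMom p) - (κ / ‖p.1‖) • p.1

/-- LRL direction vector `Θ = A/‖A‖`. -/
def lrlDir (κ : ℝ) (p : E3 × E3) : E3 := ‖lrl κ p‖⁻¹ • lrl κ p

/-- Levi-Civita symbol `ε_{ijk}` on indices in `{0,1,2}`. -/
def eps (i j k : Fin 3) : ℝ :=
  (((j : ℕ) : ℝ) - ((i : ℕ) : ℝ)) * (((k : ℕ) : ℝ) - ((i : ℕ) : ℝ))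
    * (((k : ℕ) : ℝ) - ((j : ℕ) : ℝ)) / 2

section NormDerivative

open NormedSpace
open scoped RealInnerProductSpace

variable {E : Type*} [NormedAddCommGroup E] [InnerProductSpace ℝ E] {x : E}

lemma hasFDerivAt_norm_inv (hx : x ≠ 0) :
    HasFDerivAt (fun y : E => ‖y‖⁻¹) (-(‖x‖ ^ 3)⁻¹ • innerSL ℝ x) x := by
  have hnorm : ‖x‖ ≠ 0 := norm_ne_zero_iff.2 hx
  have hsqrt := (hasStrictFDerivAt_norm_sq x).hasFDerivAt.sqrt (pow_ne_zero 2 hnorm)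
  simp only [Real.sqrt_sq (norm_nonneg _)] at hsqrt
  refine ((hasDerivAt_inv hnorm).comp_hasFDerivAt x hsqrt).congr_fderiv ?_
  ext y
  simp only [smul_smul, ← Nat.cast_smul_eq_nsmul ℝ, smul_apply]
  congr 1
  field_simp
  simp

lemma hasFDerivAt_normalize (hx : x ≠ 0) :
    HasFDerivAt (normalize : E → E)
      (‖x‖⁻¹ • (.id ℝ E - (innerSL ℝ (normalize x)).smulRight (normalize x))) x := by
  refine ((hasFDerivAt_norm_inv hx).smul (hasFDerivAt_id x)).congr_fderiv ?_
  ext y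
  simp only [NormedSpace.normalize, id_eq, add_apply, sub_apply, neg_smul, neg_apply, smul_apply,
    map_smul, coe_innerSL_apply, smul_eq_mul, ContinuousLinearMap.id_apply,
    ContinuousLinearMap.smulRight_apply, smul_sub, smul_smul]
  module

end NormDerivative

section ExpandedLRL

open InnerProductSpace
open scoped RealInnerProductSpace Gradient

variable {E : Type*} [NormedAddCommGroup E] [InnerProductSpace ℝ E]

/-- The component `A · w` of the Laplace–Runge–Lenz vector along `w`, in any dimension: the double
cross product `v × (r × v)` is replaced by its expansion `‖v‖² r − ⟪r, v⟫ v`. -/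
def lrlAlong (κ : ℝ) (w r v : E) : ℝ :=
  (‖v‖ ^ 2 - κ / ‖r‖) * ⟪r, w⟫ - ⟪r, v⟫ * ⟪v, w⟫

variable [CompleteSpace E]

lemma hasGradientAt_lrlAlong_pos (κ : ℝ) (w v : E) {r : E} (hr : r ≠ 0) :
    HasGradientAt (fun x => lrlAlong κ w x v)
      ((‖v‖ ^ 2 - κ / ‖r‖) • w + (κ / ‖r‖ ^ 3 * ⟪r, w⟫) • r - ⟪v, w⟫ • v) r := by
  have hinner (u : E) := (hasFDerivAt_id r).inner ℝ (hasFDerivAt_const u r)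
  have hcoeff := ((hasFDerivAt_norm_inv hr).const_mul κ).const_sub (‖v‖ ^ 2)
  simp only [lrlAlong, div_eq_mul_inv, hasGradientAt_iff_hasFDerivAt]
  refine ((hcoeff.mul (hinner w)).sub ((hinner v).mul_const ⟪v, w⟫)).congr_fderiv ?_
  ext y
  simp only [id_eq, neg_smul, smul_neg, neg_neg, add_apply, sub_apply, smul_apply, zero_apply,
    smul_eq_mul, map_add, map_sub, map_smul, ContinuousLinearMap.comp_apply,
    ContinuousLinearMap.prod_apply, ContinuousLinearMap.id_apply, fderivInnerCLM_apply,
    inner_zero_right, zero_add, coe_innerSL_apply, toDual_apply_apply, real_inner_comm y]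
  ring

lemma hasGradientAt_lrlAlong_vel (κ : ℝ) (w r v : E) :
    HasGradientAt (fun y => lrlAlong κ w r y)
      ((2 * ⟪r, w⟫) • v - ⟪r, v⟫ • w - ⟪v, w⟫ • r) v := by
  have hcoeff := (hasStrictFDerivAt_norm_sq v).hasFDerivAt.sub_const (κ / ‖r‖)
  have hrv := (hasFDerivAt_const r v).inner ℝ (hasFDerivAt_id v)
  have hvw := (hasFDerivAt_id v).inner ℝ (hasFDerivAt_const w v)
  rw [hasGradientAt_iff_hasFDerivAt]
  refine ((hcoeff.mul_const ⟪r, w⟫).sub (hrv.mul hvw)).congr_fderiv ?_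
  ext y
  simp only [id_eq, add_apply, sub_apply, smul_apply, zero_apply, nsmul_eq_mul, Nat.cast_ofNat,
    smul_eq_mul, map_sub, map_smul, ContinuousLinearMap.comp_apply, ContinuousLinearMap.prod_apply,
    ContinuousLinearMap.id_apply, fderivInnerCLM_apply, inner_zero_left, inner_zero_right, zero_add,
    add_zero, coe_innerSL_apply, toDual_apply_apply, real_inner_comm y]
  ring

lemma inner_gradient_lrlAlong_sub (κ : ℝ) (u w v : E) {r : E} (hr : r ≠ 0) :
    ⟪∇ (fun x => lrlAlong κ u x v) r, ∇ (fun y => lrlAlong κ w r y) v⟫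
        - ⟪∇ (fun x => lrlAlong κ w x v) r, ∇ (fun y => lrlAlong κ u r y) v⟫
      = -2 * (1 / 2 * ‖v‖ ^ 2 - κ / ‖r‖) * (⟪r, u⟫ * ⟪v, w⟫ - ⟪r, w⟫ * ⟪v, u⟫) := by
  have hnorm : ‖r‖ ≠ 0 := norm_ne_zero_iff.2 hr
  simp only [(hasGradientAt_lrlAlong_pos κ _ v hr).gradient,
    (hasGradientAt_lrlAlong_vel κ _ r v).gradient, inner_add_left, inner_sub_left, inner_sub_right,
    real_inner_smul_left, real_inner_smul_right, real_inner_self_eq_norm_sq,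
    real_inner_comm r v, real_inner_comm r u, real_inner_comm r w, real_inner_comm v u,
    real_inner_comm v w, real_inner_comm u w]
  field_simp
  ring

end ExpandedLRL

section Bracket

open NormedSpace

lemma dot_eq_inner (a b : E3) : dot a b = inner ℝ a b := by
  simp [dot, PiLp.inner_apply, mul_comm]

variable {V : Type*} [NormedAddCommGroup V] [NormedSpace ℝ V]

/-- The Poisson bracket `{F, A}` of a scalar function `F` with a function `A` valued in a normed
space: the derivative of `A` along the vector `(−∇_v F, ∇_r F)`. It packages the brackets of `F`
with all components of `A`. -/
def pbVec (F : E3 × E3 → ℝ) (A : E3 × E3 → V) (p : E3 × E3) : V :=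
  fderiv ℝ (fun y => A (p.1, y)) p.2 (gradR F p) - fderiv ℝ (fun x => A (x, p.2)) p.1 (gradV F p)

lemma pb_eq_pbVec (F G : E3 × E3 → ℝ) (p : E3 × E3) : pb F G p = pbVec F G p := by
  simp only [pb, pbVec, dot_eq_inner]
  rw [real_inner_comm, gradV, gradR, gradR, inner_gradient_left, inner_gradient_left]

lemma pb_comp (F : E3 × E3 → ℝ) {A : E3 × E3 → V} {p : E3 × E3} {φ : V → ℝ} {φ' : V →L[ℝ] ℝ}
    (hφ : HasFDerivAt φ φ' (A p)) (hpos : DifferentiableAt ℝ (fun x => A (x, p.2)) p.1)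
    (hvel : DifferentiableAt ℝ (fun y => A (p.1, y)) p.2) :
    pb F (fun q => φ (A q)) p = φ' (pbVec F A p) := by
  have hφpos := (hφ.comp p.1 hpos.hasFDerivAt).fderiv
  have hφvel := (hφ.comp p.2 hvel.hasFDerivAt).fderiv
  simp only [Function.comp_def] at hφpos hφvel
  simp [pb_eq_pbVec, pbVec, hφpos, hφvel]

lemma pb_normalize_apply {ι : Type*} [Fintype ι] (F : E3 × E3 → ℝ)
    {A : E3 × E3 → EuclideanSpace ℝ ι} {p : E3 × E3} (hA : A p ≠ 0)
    (hpos : DifferentiableAt ℝ (fun x => A (x, p.2)) p.1)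
    (hvel : DifferentiableAt ℝ (fun y => A (p.1, y)) p.2) (i : ι) :
    pb F (fun q => normalize (A q) i) p
      = ‖A p‖⁻¹ * (pb F (fun q => A q i) p
          - (∑ l, normalize (A p) l * pb F (fun q => A q l) p) * normalize (A p) i) := by
  have happly (l : ι) : pb F (fun q => A q l) p = pbVec F A p l :=
    pb_comp F (EuclideanSpace.proj l : _ →L[ℝ] ℝ).hasFDerivAt hpos hvel
  have hcoord := (EuclideanSpace.proj i : _ →L[ℝ] ℝ).hasFDerivAt.comp _ (hasFDerivAt_normalize hA)
  refine (pb_comp F hcoord hpos hvel).trans ?_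
  simp [happly, PiLp.inner_apply, mul_comm]

end Bracket

section LRL

lemma cross_cross_self (r v : E3) : cross v (cross r v) = ‖v‖ ^ 2 • r - inner ℝ r v • v := by
  ext j
  rw [EuclideanSpace.real_norm_sq_eq, PiLp.inner_apply]
  fin_cases j <;> simp [cross, toE3, Fin.sum_univ_three] <;> ring

lemma lrl_apply (κ : ℝ) (r v : E3) (j : Fin 3) :
    lrl κ (r, v) j = lrlAlong κ (EuclideanSpace.single j 1) r v := by
  simp only [lrl, angMom, cross_cross_self, lrlAlong, PiLp.sub_apply, PiLp.smul_apply, smul_eq_mul,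
    EuclideanSpace.inner_single_right, Real.ringHom_apply, one_mul]
  ring

lemma differentiableAt_lrl_pos (κ : ℝ) {r : E3} (v : E3) (hr : r ≠ 0) :
    DifferentiableAt ℝ (fun x => lrl κ (x, v)) r := by
  simp only [differentiableAt_euclidean, lrl_apply]
  exact fun _ => (hasGradientAt_lrlAlong_pos κ _ v hr).differentiableAt

lemma differentiableAt_lrl_vel (κ : ℝ) (r v : E3) :
    DifferentiableAt ℝ (fun y => lrl κ (r, y)) v := by
  simp only [differentiableAt_euclidean, lrl_apply]
  exact fun _ => (hasGradientAt_lrlAlong_vel κ _ r v).differentiableAt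

lemma sum_eps_mul_cross (a b : E3) (j l : Fin 3) :
    ∑ k, eps j l k * cross a b k = a j * b l - a l * b j := by
  fin_cases j <;> fin_cases l <;> simp [eps, cross, toE3, Fin.sum_univ_three] <;> ring

lemma pb_lrl_lrl (κ : ℝ) {r : E3} (v : E3) (hr : r ≠ 0) (j l : Fin 3) :
    pb (fun p => lrl κ p j) (fun p => lrl κ p l) (r, v)
      = -2 * energy κ (r, v) * ∑ k, eps j l k * angMom (r, v) k := by
  simp only [pb, gradR, gradV, dot_eq_inner, lrl_apply]
  rw [inner_gradient_lrlAlong_sub κ _ _ v hr, angMom, sum_eps_mul_cross, energy]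
  simp [EuclideanSpace.inner_single_right]

end LRL

theorem poisson_lrl_lrlDir_general (κ : ℝ) (i j : Fin 3)
    (r v : E3) (hr : r ≠ 0) (hA : lrl κ (r, v) ≠ 0) :
    pb (fun p => lrl κ p j) (fun p => lrlDir κ p i) (r, v)
      = 2 * energy κ (r, v) * ‖lrl κ (r, v)‖⁻¹
          * ∑ k, ((∑ l, eps j l k * lrlDir κ (r, v) l) * lrlDir κ (r, v) i
                    - eps j i k) * angMom (r, v) k := by
  calc
    _ = ‖lrl κ (r, v)‖⁻¹ * (pb (fun p => lrl κ p j) (fun p => lrl κ p i) (r, v)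
          - (∑ l, lrlDir κ (r, v) l * pb (fun p => lrl κ p j) (fun p => lrl κ p l) (r, v))
            * lrlDir κ (r, v) i) :=
      pb_normalize_apply (fun p => lrl κ p j) hA
        (differentiableAt_lrl_pos κ v hr) (differentiableAt_lrl_vel κ r v) i
    _ = _ := by
      simp only [pb_lrl_lrl κ v hr, Fin.sum_univ_three]
      ring

/-- The Poisson bracket of a component of the LRL vector with a component of the
LRL direction vector:
`{A_j, Θ_i} = 2E‖A‖⁻¹ Σ_k ((Σ_l ε_{jlk} Θ_l) Θ_i − ε_{jik}) L_k` where `A ≠ 0`. -/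
theorem poisson_lrl_lrlDir (κ : ℝ) (hκ : 0 < κ) (i j : Fin 3)
    (r v : E3) (hr : r ≠ 0) (hA : lrl κ (r, v) ≠ 0) :
    pb (fun p => lrl κ p j) (fun p => lrlDir κ p i) (r, v)
      = 2 * energy κ (r, v) * ‖lrl κ (r, v)‖⁻¹
          * ∑ k, ((∑ l, eps j l k * lrlDir κ (r, v) l) * lrlDir κ (r, v) i
                    - eps j i k) * angMom (r, v) k :=
  poisson_lrl_lrlDir_general κ i j r v hr hA
end
end

section
/- Let E < 0, set ω = √(−2E), let n ∈ ℝ³ be a unit vector, and let L₀, A₀ ∈ ℝ³; put M₀ = ω⁻¹ A₀. For θ ∈ ℝ and x ∈ ℝ³ let R(θ)x = cos θ · x + (1 − cos θ)(n · x) n + sin θ · (n × x) be the Rodrigues rotation about n. Then the functions L(s) = (1/2) ( R(ωs)(L₀ + M₀) + R(−ωs)(L₀ − M₀) ) and A(s) = (ω/2) ( R(ωs)(L₀ + M₀) − R(−ωs)(L₀ − M₀) ) satisfy L'(s) = n × A(s) and A'(s) = −2E ( n × L(s) ) for all s ∈ ℝ, with L(0) = L₀ and A(0) = A₀; that is, for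 negative energy the LRL symmetry flow acts on L + M and L − M by independent rotations about n through angles ±ωs. -/
/-! If `J` is linear with `J³ = -J`, then `exp (θ J) = 1 + sin θ J + (1 - cos θ) J²`, and this is
Rodrigues' formula when `J = n × ·` with `n` a unit vector. The system `L' = J A`, `A' = ω² J L`
decouples in the coordinates `u = L + ω⁻¹ A` and `v = L - ω⁻¹ A` into `u' = ω J u` and
`v' = -ω J v`, so that `u` and `v` move by `exp (± ω s J)`. -/

noncomputable section

section Rodrigues

variable {V : Type*} [AddCommGroup V] [Module ℝ V]

/-- The operator `1 + sin θ J + (1 - cos θ) J²` of Rodrigues' rotation formula. It equals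
`exp (θ J)` when `J ^ 3 = -J`, but is defined for every endomorphism `J` of a real vector space. -/
def rodrigues (J : Module.End ℝ V) (θ : ℝ) : Module.End ℝ V :=
  1 + Real.sin θ • J + (1 - Real.cos θ) • J ^ 2

lemma rodrigues_apply (J : Module.End ℝ V) (θ : ℝ) (x : V) :
    rodrigues J θ x = x + Real.sin θ • J x + (1 - Real.cos θ) • J (J x) := by
  simp only [rodrigues, pow_two, LinearMap.add_apply, LinearMap.smul_apply, Module.End.one_apply,
    Module.End.mul_apply]

lemma rodrigues_zero (J : Module.End ℝ V) : rodrigues J 0 = 1 := by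
  simp [rodrigues]

end Rodrigues

section Flow

variable {V : Type*} [NormedAddCommGroup V] [NormedSpace ℝ V] {J : Module.End ℝ V}

lemma hasDerivAt_rodrigues (hJ : J ^ 3 = -J) (x : V) (θ : ℝ) :
    HasDerivAt (fun t ↦ rodrigues J t x) (J (rodrigues J θ x)) θ := by
  have hJx : J (J (J x)) = -J x := by
    simpa only [pow_three, Module.End.mul_apply, LinearMap.neg_apply] using
      LinearMap.congr_fun hJ x
  have hderiv : HasDerivAt (fun t ↦ x + Real.sin t • J x + (1 - Real.cos t) • J (J x))
      (Real.cos θ • J x + Real.sin θ • J (J x)) θ := by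
    simpa only [neg_neg] using (((Real.hasDerivAt_sin θ).smul_const (J x)).const_add x).fun_add
      (((Real.hasDerivAt_cos θ).const_sub 1).smul_const (J (J x)))
  have hgen : J (rodrigues J θ x) = Real.cos θ • J x + Real.sin θ • J (J x) := by
    simp only [rodrigues_apply, map_add, map_smul, hJx]
    module
  simpa only [rodrigues_apply, ← hgen] using hderiv

lemma hasDerivAt_rodrigues_const_mul (hJ : J ^ 3 = -J) (x : V) (c s : ℝ) :
    HasDerivAt (fun t ↦ rodrigues J (c * t) x) (c • J (rodrigues J (c * s) x)) s := by
  have hlin : HasDerivAt (fun t ↦ c * t) c s := by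
    simpa only [mul_one] using (hasDerivAt_id' s).const_mul c
  exact (hasDerivAt_rodrigues hJ x (c * s)).scomp s hlin

variable {u v : ℝ → V} {ω s : ℝ}

lemma hasDerivAt_half_smul_add (hu : HasDerivAt u (ω • J (u s)) s)
    (hv : HasDerivAt v (-ω • J (v s)) s) :
    HasDerivAt (fun t ↦ (1 / 2 : ℝ) • (u t + v t)) (J ((ω / 2) • (u s - v s))) s := by
  refine ((hu.add hv).const_smul (1 / 2 : ℝ)).congr_deriv ?_
  simp only [map_smul, map_sub]
  module

lemma hasDerivAt_half_smul_sub (hu : HasDerivAt u (ω • J (u s)) s)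
    (hv : HasDerivAt v (-ω • J (v s)) s) :
    HasDerivAt (fun t ↦ (ω / 2) • (u t - v t)) (ω ^ 2 • J ((1 / 2 : ℝ) • (u s + v s))) s := by
  refine ((hu.sub hv).const_smul (ω / 2)).congr_deriv ?_
  simp only [map_smul, map_add]
  module

end Flow

section CrossProduct

open scoped Matrix

lemma dot_eq_dotProduct (a b : E3) : dot a b = a.ofLp ⬝ᵥ b.ofLp := rfl

lemma dot_self (a : E3) : dot a a = ‖a‖ ^ 2 := by
  simp only [dot, EuclideanSpace.real_norm_sq_eq, ← pow_two]

lemma cross_eq_toLp_crossProduct (a b : E3) : cross a b = WithLp.toLp 2 (a.ofLp ⨯₃ b.ofLp) := by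
  rw [cross_apply]
  rfl

lemma cross_cross_eq_dot_smul_sub (a b c : E3) :
    cross a (cross b c) = dot a c • b - dot a b • c := by
  simp only [cross_eq_toLp_crossProduct, cross_cross_eq_smul_sub_smul', dot_eq_dotProduct,
    dotProduct_comm b.ofLp a.ofLp, WithLp.toLp_sub, WithLp.toLp_smul, WithLp.toLp_ofLp]

lemma dot_left_cross (a b : E3) : dot a (cross a b) = 0 := by
  rw [dot_eq_dotProduct, cross_eq_toLp_crossProduct, dot_self_cross]

/-- The linear map `x ↦ n × x`, the infinitesimal generator of rotations about `n`. -/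
def crossLeft (n : E3) : Module.End ℝ E3 :=
  (WithLp.linearEquiv 2 ℝ (Fin 3 → ℝ)).symm.conj (crossProduct n.ofLp)

lemma crossLeft_apply (n x : E3) : crossLeft n x = cross n x :=
  (cross_eq_toLp_crossProduct n x).symm

lemma crossLeft_pow_three (n : E3) : crossLeft n ^ 3 = -(‖n‖ ^ 2 • crossLeft n) := by
  ext1 x
  simp only [pow_three, Module.End.mul_apply, LinearMap.neg_apply, LinearMap.smul_apply,
    crossLeft_apply]
  rw [cross_cross_eq_dot_smul_sub n n, dot_left_cross, dot_self, zero_smul, zero_sub]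

lemma rodrigues_crossLeft_apply {n : E3} (hn : ‖n‖ = 1) (θ : ℝ) (x : E3) :
    rodrigues (crossLeft n) θ x =
      Real.cos θ • x + ((1 - Real.cos θ) * dot n x) • n + Real.sin θ • cross n x := by
  simp only [rodrigues_apply, crossLeft_apply, cross_cross_eq_dot_smul_sub, dot_self, hn]
  module

end CrossProduct

/-- For negative energy, the LRL symmetry flow acts on `L + M` and `L − M`
(where `M = A/√(−2E)`) by independent Rodrigues rotations about the unit vector
`n` through angles `±ωs`, `ω = √(−2E)`: the stated `L(s)`, `A(s)` solve
`L' = n × A`, `A' = −2E (n × L)` with `L(0) = L₀`, `A(0) = A₀`. -/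
theorem lrl_flow_negative_energy (E : ℝ) (hE : E < 0) (n : E3) (hn : ‖n‖ = 1)
    (L₀ A₀ : E3) (ω : ℝ) (hω : ω = Real.sqrt (-2 * E))
    (M₀ : E3) (hM₀ : M₀ = ω⁻¹ • A₀)
    (R : ℝ → E3 → E3)
    (hR : ∀ (θ : ℝ) (x : E3),
      R θ x = Real.cos θ • x + ((1 - Real.cos θ) * dot n x) • n
                + Real.sin θ • cross n x)
    (L A : ℝ → E3)
    (hLdef : ∀ s : ℝ,
      L s = (1/2 : ℝ) • (R (ω * s) (L₀ + M₀) + R (-(ω * s)) (L₀ - M₀)))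
    (hAdef : ∀ s : ℝ,
      A s = (ω / 2) • (R (ω * s) (L₀ + M₀) - R (-(ω * s)) (L₀ - M₀))) :
    (∀ s : ℝ, HasDerivAt L (cross n (A s)) s) ∧
    (∀ s : ℝ, HasDerivAt A ((-2 * E) • cross n (L s)) s) ∧
    L 0 = L₀ ∧ A 0 = A₀ := by
  obtain rfl : R = fun θ x ↦ rodrigues (crossLeft n) θ x := by
    funext θ x
    rw [hR, rodrigues_crossLeft_apply hn]
  have hJ : crossLeft n ^ 3 = -crossLeft n := by
    rw [crossLeft_pow_three, hn, one_pow, one_smul]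
  have hω_sq : ω ^ 2 = -2 * E := by rw [hω, Real.sq_sqrt (by linarith)]
  have hω_ne : ω ≠ 0 := by rw [hω]; exact (Real.sqrt_pos.mpr (by linarith)).ne'
  have hA₀ : A₀ = ω • M₀ := by rw [hM₀, smul_inv_smul₀ hω_ne]
  have hu := hasDerivAt_rodrigues_const_mul hJ (L₀ + M₀) ω
  have hv := hasDerivAt_rodrigues_const_mul hJ (L₀ - M₀) (-ω)
  simp only [neg_mul] at hv
  refine ⟨fun s ↦ ?_, fun s ↦ ?_, ?_, ?_⟩
  · rw [funext hLdef, hAdef, ← crossLeft_apply]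
    exact hasDerivAt_half_smul_add (hu s) (hv s)
  · rw [funext hAdef, hLdef, ← crossLeft_apply, ← hω_sq]
    exact hasDerivAt_half_smul_sub (hu s) (hv s)
  · simp only [hLdef, mul_zero, neg_zero, rodrigues_zero, Module.End.one_apply]
    module
  · simp only [hAdef, hA₀, mul_zero, neg_zero, rodrigues_zero, Module.End.one_apply]
    module
end
end
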